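/- If the theorem existence problem for finite Nmatrices is decidable — that is, if there is an algorithm which, given (an encoding of) a finite signature Σ and a finite Σ-Nmatrix M, decides whether Thm(Σ, ⊢_M) ≠ ∅ — then the halting problem for counter machines with all counters initially set to zero is decidable. Consequently, since the latter is undecidable, the theorem existence problem for finite Nmatrices is undecidable. -/

import Mathlib

structure Signature where
  Conn : Type
  arity : Conn → ℕ

inductive Fm (S : Signature) : Type where
  | var : ℕ → Fm S
  | app : (c : S.Conn) → (Fin (S.arity c) → Fm S) → Fm S

def Fm.subst {S : Signature} (σ : ℕ → Fm S) : Fm S → Fm S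
  | .var i => σ i
  | .app c args => .app c (fun j => (args j).subst σ)

def Fm.varsLT {S : Signature} (n : ℕ) : Fm S → Prop
  | .var i => i < n
  | .app _ args => ∀ j, (args j).varsLT n

structure NMatrix (S : Signature) (V : Type) where
  D : Set V
  interp : (c : S.Conn) → (Fin (S.arity c) → V) → Set V
  interp_nonempty : ∀ c args, (interp c args).Nonempty

def IsVal {S : Signature} {V : Type} (M : NMatrix S V) (v : Fm S → V) : Prop :=
  ∀ (c : S.Conn) (args : Fin (S.arity c) → Fm S),
    v (Fm.app c args) ∈ M.interp c (fun i => v (args i))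

def Entails {S : Signature} {V : Type} (M : NMatrix S V) (Γ : Set (Fm S)) (A : Fm S) : Prop :=
  ∀ v, IsVal M v → (∀ B ∈ Γ, v B ∈ M.D) → v A ∈ M.D

def Interderiv {S : Signature} {V : Type} (M : NMatrix S V) (A B : Fm S) : Prop :=
  Entails M {A} B ∧ Entails M {B} A

def Deterministic {S : Signature} {V : Type} (M : NMatrix S V) : Prop :=
  ∀ c args, ∃ x, M.interp c args = {x}

inductive CMNum : Type where
  | r0 | ge0 | ge1 | ge2
deriving DecidableEq

inductive CMInstr (n : ℕ) (Q : Type) : Type where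
  | inc : Fin n → Q → CMInstr n Q
  | dec : Fin n → Q → Q → CMInstr n Q

structure CounterMachine where
  n : ℕ
  Q : Type
  finQ : Finite Q
  qinit : Q
  δ : Q → Option (CMInstr n Q)

inductive CMVal (C : CounterMachine) : Type where
  | num : CMNum → CMVal C
  | conf : C.Q → (Fin C.n → CMNum) → CMVal C
  | init : CMVal C
  | error : CMVal C

inductive CMConn (C : CounterMachine) : Type where
  | zero : CMConn C
  | eps : CMConn C
  | succ : CMConn C
  | step : C.Q → CMConn C

def CMSig (C : CounterMachine) : Signature where
  Conn := CMConn C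
  arity := fun c => match c with
    | .zero => 0
    | .eps => 0
    | .succ => 1
    | .step _ => C.n + 1

/-- Interpretation of `succ` on abstract numbers. -/
def zeroNum : Set CMNum := {.r0, .ge0}

def succNum : CMNum → Set CMNum
  | .r0 => {.ge1}
  | .ge0 => {.ge0, .ge1}
  | .ge1 => {.ge2}
  | .ge2 => {.ge2}

/-- Interpretation of `succ` in the Nmatrix induced by `C`. -/
def succC (C : CounterMachine) : CMVal C → Set (CMVal C)
  | .num x => CMVal.num '' succNum x
  | _ => {.error}

/-- Interpretation of `zero` in the Nmatrix induced by `C`. -/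
def zeroC (C : CounterMachine) : Set (CMVal C) := {.num .r0, .num .ge0}

/-- The condition under which `step^q` applied to `x` and a tuple of numbers `zn`
produces the configuration value `conf q zn`. -/
def stepOK (C : CounterMachine) (q : C.Q) (x : CMVal C) (zn : Fin C.n → CMNum) : Prop :=
  (x = CMVal.init ∧ q = C.qinit ∧ ((∀ i, zn i = .r0) ∨ (∀ i, zn i = .ge0))) ∨
  (∃ (q' : C.Q) (yn : Fin C.n → CMNum), x = CMVal.conf q' yn ∧
    ((∃ i, C.δ q' = some (.inc i q) ∧ zn i ∈ succNum (yn i) ∧ ∀ l, l ≠ i → zn l = yn l) ∨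
     (∃ i s, C.δ q' = some (.dec i q s) ∧ yn i ∈ succNum (zn i) ∧ ∀ l, l ≠ i → zn l = yn l) ∨
     (∃ i s, C.δ q' = some (.dec i s q) ∧ yn i ∈ zeroNum ∧ zn = yn)))

/-- Interpretation of `step^q` in the Nmatrix induced by `C`. -/
def stepC (C : CounterMachine) (q : C.Q) (x : CMVal C) (z : Fin C.n → CMVal C) :
    Set (CMVal C) :=
  { w | (∃ zn : Fin C.n → CMNum, (∀ i, z i = .num (zn i)) ∧ stepOK C q x zn ∧
          w = .conf q zn) ∨
        (¬ (∃ zn : Fin C.n → CMNum, (∀ i, z i = .num (zn i)) ∧ stepOK C q x zn) ∧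
          w = .error) }

lemma succC_nonempty (C : CounterMachine) (x : CMVal C) : (succC C x).Nonempty := by
  cases x with
  | num y =>
      cases y
      · exact ⟨.num .ge1, by simp [succC, succNum]⟩
      · exact ⟨.num .ge0, by simp [succC, succNum]⟩
      · exact ⟨.num .ge2, by simp [succC, succNum]⟩
      · exact ⟨.num .ge2, by simp [succC, succNum]⟩
  | conf q r => exact ⟨.error, rfl⟩
  | init => exact ⟨.error, rfl⟩
  | error => exact ⟨.error, rfl⟩

lemma stepC_nonempty (C : CounterMachine) (q : C.Q) (x : CMVal C)
    (z : Fin C.n → CMVal C) : (stepC C q x z).Nonempty := by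
  by_cases h : ∃ zn : Fin C.n → CMNum, (∀ i, z i = .num (zn i)) ∧ stepOK C q x zn
  · obtain ⟨zn, hz, hok⟩ := h
    exact ⟨.conf q zn, Or.inl ⟨zn, hz, hok, rfl⟩⟩
  · exact ⟨.error, Or.inr ⟨h, rfl⟩⟩

/-- The Nmatrix ℂ induced by the counter machine `C`. -/
def CMmatrix (C : CounterMachine) : NMatrix (CMSig C) (CMVal C) where
  D := { w | ∃ (q : C.Q) (r : Fin C.n → CMNum), w = CMVal.conf q r ∧ C.δ q = none }
  interp := fun c => match c with
    | .zero => fun _ => zeroC C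
    | .eps => fun _ => {CMVal.init}
    | .succ => fun args => succC C (args ⟨0, Nat.one_pos⟩)
    | .step q => fun args => stepC C q (args ⟨0, Nat.succ_pos _⟩) (fun i => args i.succ)
  interp_nonempty := by
    intro c args
    cases c with
    | zero => exact ⟨.num .r0, Or.inl rfl⟩
    | eps => exact ⟨.init, rfl⟩
    | succ => exact succC_nonempty C _
    | step q => exact stepC_nonempty C q _ _

/-- Encoding of natural numbers as closed formulas. -/
def enc (C : CounterMachine) : ℕ → Fm (CMSig C)
  | 0 => .app .zero (fun i => i.elim0)
  | a + 1 => .app .succ (fun _ => enc C a)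

/-- Configurations of a counter machine. -/
def Config (C : CounterMachine) : Type := C.Q × (Fin C.n → ℕ)

/-- One step of computation: `none` when the configuration is halting. -/
def nextConf (C : CounterMachine) (cfg : Config C) : Option (Config C) :=
  match C.δ cfg.1 with
  | none => none
  | some (.inc i q') => some (q', Function.update cfg.2 i (cfg.2 i + 1))
  | some (.dec i q' q'') =>
      if cfg.2 i = 0 then some (q'', cfg.2)
      else some (q', Function.update cfg.2 i (cfg.2 i - 1))

/-- The configuration reached after `k` steps starting from ⟨q_init, 0⃗⟩, or `none` if the
machine has already halted strictly before step `k`. -/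
def steps (C : CounterMachine) : ℕ → Option (Config C)
  | 0 => some (C.qinit, fun _ => 0)
  | k + 1 => (steps C k).bind (nextConf C)

/-- A configuration is halting when the transition function is undefined on its state. -/
def Halting (C : CounterMachine) (cfg : Config C) : Prop := C.δ cfg.1 = none

/-- Encoding of a reversed list of configurations as a formula (head = last configuration). -/
def seqRev (C : CounterMachine) : List (Config C) → Fm (CMSig C)
  | [] => .app .eps (fun i => i.elim0)
  | cfg :: rest =>
      .app (.step cfg.1) (Fin.cons (seqRev C rest) (fun i => enc C (cfg.2 i)))

/-- Encoding of a finite sequence of configurations as a formula. -/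
def seqFm (C : CounterMachine) (l : List (Config C)) : Fm (CMSig C) := seqRev C l.reverse

/-- The list of configurations ⟨C₀, …, C_k⟩ of the computation of `C` from all counters zero. -/
def compList (C : CounterMachine) (k : ℕ) : List (Config C) :=
  (List.range (k + 1)).filterMap (steps C)

/-- The signature encoded by a list of arities. -/
abbrev codeSig (ar : List ℕ) : Signature := ⟨Fin ar.length, fun j => ar.get j⟩

-- The finite Σ-Nmatrix encoded by the data `(ar, m, tbl, ds)`: its truth-values are
-- `Fin (m+1)`, its designated values are those listed in `ds`, and the interpretation of
-- connective `j` on an argument tuple is read off from the table `tbl` (defaulting to `{0}`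
-- on malformed entries, so that decoding is total).
open Classical in
noncomputable def decodeNMat (ar : List ℕ) (m : ℕ) (tbl : List (List (List ℕ)))
    (ds : List ℕ) : NMatrix (codeSig ar) (Fin (m + 1)) where
  D := { x : Fin (m + 1) | (x : ℕ) ∈ ds }
  interp := fun j args =>
    let row := (tbl.getD (j : ℕ) []).getD (∑ i, ((args i) : ℕ) * (m + 1) ^ (i : ℕ)) []
    if ∃ x : Fin (m + 1), (x : ℕ) ∈ row then { x : Fin (m + 1) | (x : ℕ) ∈ row } else {0}
  interp_nonempty := by
    intro j args
    dsimp only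
    split
    · next h => exact h
    · exact ⟨0, rfl⟩

/-- Codes of finite Nmatrices (the signature part, a list of arities, comes first). -/
abbrev NMatCode : Type := List ℕ × ℕ × List (List (List ℕ)) × List ℕ

/-- The theorem existence problem for finite Nmatrices, as a predicate on codes. -/
noncomputable def thmExistsProblem (c : NMatCode) : Prop :=
  ∃ A : Fm (codeSig c.1), Entails (decodeNMat c.1 c.2.1 c.2.2.1 c.2.2.2) ∅ A

/-- Codes of counter machines: number of counters, number of states minus one, initial
state, and the transition table (entry `q`: `none` = halt, `inl (i,q')` = inc(i) then q',
`inr (i,q',q'')` = dec(i) branching to q' / q''). -/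
abbrev CMCode : Type := ℕ × ℕ × ℕ × List (Option ((ℕ × ℕ) ⊕ (ℕ × ℕ × ℕ)))

/-- The counter machine encoded by `(n, s, q0, tbl)`; states are `Fin (s+1)` and malformed
entries are treated as halting. -/
def decodeCM (n s q0 : ℕ) (tbl : List (Option ((ℕ × ℕ) ⊕ (ℕ × ℕ × ℕ)))) :
    CounterMachine where
  n := n
  Q := Fin (s + 1)
  finQ := Finite.of_fintype _
  qinit := ⟨q0 % (s + 1), Nat.mod_lt _ (Nat.succ_pos s)⟩
  δ := fun q =>
    match tbl.getD q.val none with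
    | none => none
    | some (.inl (i, q')) =>
        if h : i < n then
          some (.inc ⟨i, h⟩ ⟨q' % (s + 1), Nat.mod_lt _ (Nat.succ_pos s)⟩)
        else none
    | some (.inr (i, q', q'')) =>
        if h : i < n then
          some (.dec ⟨i, h⟩ ⟨q' % (s + 1), Nat.mod_lt _ (Nat.succ_pos s)⟩
            ⟨q'' % (s + 1), Nat.mod_lt _ (Nat.succ_pos s)⟩)
        else none

/-- A counter machine halts from zero if its computation with all counters initially zero
reaches a halting configuration. -/
def cmHaltsFromZero (C : CounterMachine) : Prop :=
  ∃ (k : ℕ) (cfg : Config C), steps C k = some cfg ∧ Halting C cfg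

/-- The halting problem for counter machines started with all counters zero. -/
def haltProblem (c : CMCode) : Prop :=
  cmHaltsFromZero (decodeCM c.1 c.2.1 c.2.2.1 c.2.2.2)

namespace NMatUndec

open Turing.ToPartrec (Code)

/-- Binary trees, used to represent numbers and lists of numbers. -/
inductive BT : Type where
  | leaf : BT
  | node : BT → BT → BT

namespace BT

/-- Left subtree, with default `leaf`. -/
def hd : BT → BT
  | leaf => leaf
  | node a _ => a

/-- Right subtree, with default `leaf`. -/
def tl : BT → BT
  | leaf => leaf
  | node _ b => b

/-- Whether a tree is the leaf. -/
def isLeaf : BT → Bool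
  | leaf => true
  | node _ _ => false

/-- The tree representing a natural number. -/
def ofNat : ℕ → BT
  | 0 => leaf
  | n + 1 => node (ofNat n) (ofNat n)

/-- The tree representing a list of natural numbers. -/
def ofList : List ℕ → BT
  | [] => leaf
  | n :: l => node (ofNat n) (ofList l)

lemma eq_leaf {x : BT} (h : x.isLeaf = true) : x = leaf := by
  cases x with
  | leaf => rfl
  | node a b => cases h

lemma eq_node {x : BT} (h : x.isLeaf = false) : x = node x.hd x.tl := by
  cases x with
  | leaf => cases h
  | node a b => rfl

lemma isLeaf_ofNat (n : ℕ) : (ofNat n).isLeaf = decide (n = 0) := by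
  cases n <;> rfl

lemma hd_ofList (l : List ℕ) : (ofList l).hd = ofNat l.headI := by
  cases l <;> rfl

lemma tl_ofList (l : List ℕ) : (ofList l).tl = ofList l.tail := by
  cases l <;> rfl

lemma tl_ofNat (n : ℕ) : (ofNat n).tl = ofNat n.pred := by
  cases n <;> rfl

/-- The descending list `[n - 1, …, 0]`. -/
def desc : ℕ → List ℕ
  | 0 => []
  | n + 1 => n :: desc n

lemma ofList_desc (n : ℕ) : ofList (desc n) = ofNat n := by
  induction n with
  | zero => rfl
  | succ n ih => simp [desc, ofList, ofNat, ih]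

/-- Two trees with the same membership in every set of trees are equal. -/
lemma eq_of_forall_mark {x y : BT} (h : ∀ S : BT → Bool, S x = S y) : x = y := by
  classical
  have := h fun z => decide (z = y)
  simpa using this

end BT

open BT

/-- Big-step evaluation of partial recursive codes, on trees representing lists. -/
inductive Ev : Code → BT → BT → Prop where
  | zero' (v) : Ev .zero' v (node leaf v)
  | succ (v) : Ev .succ v (node (node v.hd v.hd) leaf)
  | tail (v) : Ev .tail v v.tl
  | cons {f g v a b} : Ev f v a → Ev g v b → Ev (.cons f g) v (node a.hd b)
  | comp {f g v u w} : Ev g v u → Ev f u w → Ev (.comp f g) v w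
  | case_zero {f g v w} : v.hd.isLeaf = true → Ev f v.tl w → Ev (.case f g) v w
  | case_succ {f g v w} : v.hd.isLeaf = false → Ev g (node v.hd.tl v.tl) w → Ev (.case f g) v w
  | fix_zero {f v w} : Ev f v w → w.hd.isLeaf = true → Ev (.fix f) v w.tl
  | fix_succ {f v w u} : Ev f v w → w.hd.isLeaf = false → Ev (.fix f) w.tl u → Ev (.fix f) v u

lemma mem_eval_comp {f g : Code} {v w : List ℕ} :
    w ∈ (Code.comp f g).eval v ↔ ∃ u ∈ g.eval v, w ∈ f.eval u := by
  rw [Code.comp_eval]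
  exact Part.mem_bind_iff

lemma eval_case_of_zero {f g : Code} {v : List ℕ} (h : v.headI = 0) :
    (Code.case f g).eval v = f.eval v.tail := by
  rw [Code.case_eval]
  change (Nat.rec (f.eval v.tail) (fun y _ => g.eval (y :: v.tail)) v.headI : Part _) = _
  rw [h]
  rfl

lemma eval_case_of_succ {f g : Code} {v : List ℕ} {k : ℕ} (h : v.headI = k + 1) :
    (Code.case f g).eval v = g.eval (k :: v.tail) := by
  rw [Code.case_eval]
  change (Nat.rec (f.eval v.tail) (fun y _ => g.eval (y :: v.tail)) v.headI : Part _) = _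
  rw [h]

/-- The function iterated by `Code.fix f`. -/
def fixStep (f : Code) : List ℕ →. List ℕ ⊕ List ℕ := fun v =>
  (f.eval v).map fun v => if v.headI = 0 then Sum.inl v.tail else Sum.inr v.tail

lemma eval_fix (f : Code) : (Code.fix f).eval = (fixStep f).fix := Code.fix_eval f

lemma inl_mem_fixStep {f : Code} {v w : List ℕ} :
    Sum.inl w ∈ fixStep f v ↔ ∃ a ∈ f.eval v, a.headI = 0 ∧ w = a.tail := by
  refine (Part.mem_map_iff _).trans (exists_congr fun a => and_congr_right fun _ => ?_)
  split_ifs with h <;> simp [h, eq_comm]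

lemma inr_mem_fixStep {f : Code} {v w : List ℕ} :
    Sum.inr w ∈ fixStep f v ↔ ∃ a ∈ f.eval v, a.headI ≠ 0 ∧ w = a.tail := by
  refine (Part.mem_map_iff _).trans (exists_congr fun a => and_congr_right fun _ => ?_)
  split_ifs with h <;> simp [h, eq_comm]

lemma Ev.sound {c : Code} {x y : BT} (h : Ev c x y) :
    ∀ v, x = ofList v → ∃ w ∈ c.eval v, y = ofList w := by
  induction h with
  | zero' x =>
    rintro v rfl
    exact ⟨0 :: v, by simp [pure], rfl⟩
  | succ x =>
    rintro v rfl
    exact ⟨[v.headI.succ], by simp, by simp [hd_ofList, ofList, ofNat]⟩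
  | tail x =>
    rintro v rfl
    exact ⟨v.tail, by simp, tl_ofList v⟩
  | cons _ _ ih₁ ih₂ =>
    rintro v rfl
    obtain ⟨a, ha, rfl⟩ := ih₁ v rfl
    obtain ⟨b, hb, rfl⟩ := ih₂ v rfl
    refine ⟨a.headI :: b, ?_, by simp [hd_ofList, ofList]⟩
    simp only [Code.cons_eval, Part.bind_eq_bind, Part.mem_bind_iff]
    exact ⟨a, ha, b, hb, by simp⟩
  | comp _ _ ih₁ ih₂ =>
    rintro v rfl
    obtain ⟨a, ha, rfl⟩ := ih₁ v rfl
    obtain ⟨b, hb, rfl⟩ := ih₂ a rfl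
    exact ⟨b, mem_eval_comp.2 ⟨a, ha, hb⟩, rfl⟩
  | case_zero h _ ih =>
    rintro v rfl
    obtain ⟨a, ha, rfl⟩ := ih v.tail (tl_ofList v)
    rw [hd_ofList, isLeaf_ofNat, decide_eq_true_eq] at h
    exact ⟨a, by rwa [eval_case_of_zero h], rfl⟩
  | case_succ h _ ih =>
    rintro v rfl
    rw [hd_ofList, isLeaf_ofNat, decide_eq_false_iff_not] at h
    obtain ⟨k, hk⟩ := Nat.exists_eq_succ_of_ne_zero h
    obtain ⟨a, ha, rfl⟩ := ih (k :: v.tail) (by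
      rw [hd_ofList, hk, tl_ofNat, tl_ofList]; rfl)
    exact ⟨a, by rwa [eval_case_of_succ hk], rfl⟩
  | fix_zero _ h ih =>
    rintro v rfl
    obtain ⟨a, ha, rfl⟩ := ih v rfl
    rw [hd_ofList, isLeaf_ofNat, decide_eq_true_eq] at h
    refine ⟨a.tail, ?_, tl_ofList a⟩
    rw [eval_fix, PFun.mem_fix_iff]
    exact Or.inl (inl_mem_fixStep.2 ⟨a, ha, h, rfl⟩)
  | fix_succ _ h _ ih₁ ih₂ =>
    rintro v rfl
    obtain ⟨a, ha, rfl⟩ := ih₁ v rfl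
    obtain ⟨b, hb, rfl⟩ := ih₂ a.tail (tl_ofList a)
    rw [hd_ofList, isLeaf_ofNat, decide_eq_false_iff_not] at h
    refine ⟨b, ?_, rfl⟩
    rw [eval_fix] at hb ⊢
    rw [PFun.mem_fix_iff]
    exact Or.inr ⟨a.tail, inr_mem_fixStep.2 ⟨a, ha, h, rfl⟩, hb⟩

lemma Ev.complete (c : Code) : ∀ v w, w ∈ c.eval v → Ev c (ofList v) (ofList w) := by
  induction c with
  | zero' =>
    intro v w h
    obtain rfl : w = 0 :: v := by simpa using h
    exact .zero' _
  | succ =>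
    intro v w h
    obtain rfl : w = [v.headI.succ] := by simpa using h
    simpa [ofList, ofNat, hd_ofList] using Ev.succ (ofList v)
  | tail =>
    intro v w h
    obtain rfl : w = v.tail := by simpa using h
    simpa [tl_ofList] using Ev.tail (ofList v)
  | cons f g ihf ihg =>
    intro v w h
    simp only [Code.cons_eval, Part.bind_eq_bind, Part.mem_bind_iff] at h
    obtain ⟨a, ha, b, hb, h⟩ := h
    obtain rfl : w = a.headI :: b := by simpa using h
    simpa [ofList, hd_ofList] using Ev.cons (ihf _ _ ha) (ihg _ _ hb)
  | comp f g ihf ihg =>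
    intro v w h
    obtain ⟨a, ha, hw⟩ := mem_eval_comp.1 h
    exact .comp (ihg _ _ ha) (ihf _ _ hw)
  | case f g ihf ihg =>
    intro v w h
    cases hv : v.headI with
    | zero =>
      rw [eval_case_of_zero hv] at h
      refine .case_zero (by simp [hd_ofList, isLeaf_ofNat, hv]) ?_
      rw [tl_ofList]
      exact ihf _ _ h
    | succ k =>
      rw [eval_case_of_succ hv] at h
      refine .case_succ (by simp [hd_ofList, isLeaf_ofNat, hv]) ?_
      rw [hd_ofList, hv, tl_ofNat, tl_ofList]
      exact ihg _ _ h
  | fix f ih =>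
    intro v w h
    rw [eval_fix] at h
    refine PFun.fixInduction (C := fun v => Ev (.fix f) (ofList v) (ofList w)) h ?_
    intro v hv hstep
    rw [PFun.mem_fix_iff] at hv
    obtain hv | ⟨v', hv, -⟩ := hv
    · obtain ⟨a, ha, h0, rfl⟩ := inl_mem_fixStep.1 hv
      rw [← tl_ofList]
      exact .fix_zero (ih _ _ ha) (by simp [hd_ofList, isLeaf_ofNat, h0])
    · obtain ⟨a, ha, h0, rfl⟩ := inr_mem_fixStep.1 hv
      refine .fix_succ (ih _ _ ha) (by simp [hd_ofList, isLeaf_ofNat, h0]) ?_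
      rw [tl_ofList]
      exact hstep _ hv

/-- A code evaluating, on the tree of `n + 1`, exactly when the `n`-th program halts on `0`. -/
lemma exists_code_halting : ∃ U : Code, ∀ n : ℕ,
    (∃ y, Ev U (ofNat (n + 1)) y) ↔
      ((Denumerable.ofNat Nat.Partrec.Code n).eval 0).Dom := by
  have hf : Nat.Partrec (fun n => (Denumerable.ofNat Nat.Partrec.Code n).eval 0) :=
    Partrec.nat_iff.1 (Nat.Partrec.Code.eval_part.comp (Computable.ofNat _) (Computable.const 0))
  obtain ⟨c, hc⟩ := Code.exists_code (Nat.Partrec'.part_iff₁.2 (Partrec.nat_iff.2 hf))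
  have key : ∀ n, (c.comp .head).eval (desc (n + 1)) =
      pure <$> (Denumerable.ofNat Nat.Partrec.Code n).eval 0 := fun n => by
    have := hc (n ::ᵥ List.Vector.nil)
    refine Eq.trans (Part.ext fun w => ?_) this
    rw [mem_eval_comp, Code.head_eval]
    simp only [desc, Part.pure_eq_some, Part.mem_some_iff, exists_eq_left, List.headI]
    rfl
  refine ⟨c.comp .head, fun n => ?_⟩
  rw [← ofList_desc]
  constructor
  · rintro ⟨y, hy⟩
    obtain ⟨w, hw, -⟩ := hy.sound _ rfl
    rw [key] at hw
    exact hw.1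
  · intro h
    have : ((c.comp .head).eval (desc (n + 1))).Dom := by rw [key]; exact h
    exact ⟨_, Ev.complete _ _ _ (Part.get_mem this)⟩

/-- Truth-values: an absorbing error, the designated value, fingerprints of data trees
(mark of the tree, of its left and of its right subtree, and whether it is the leaf) and
fingerprints of evaluation derivations (code, mark of the input, mark of the output). -/
inductive Val (T : Type) : Type where
  | err : Val T
  | win : Val T
  | data : Bool → Bool → Bool → Bool → Val T
  | drv : T → Bool → Bool → Val T

/-- Connectives: constructors of trees and evaluation rules. -/
inductive RConn (T : Type) : Type where
  | leaf : RConn T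
  | node : RConn T
  | rule : T → Bool → RConn T

namespace Val

variable {T : Type}

instance [Finite T] : Finite (Val T) := by
  let f : Option (Option ((Bool × Bool × Bool × Bool) ⊕ (T × Bool × Bool))) → Val T
    | none => err
    | some none => win
    | some (some (.inl (m, h, t, l))) => data m h t l
    | some (some (.inr (c, i, o))) => drv c i o
  refine Finite.of_surjective f ?_
  rintro (_ | _ | ⟨m, h, t, l⟩ | ⟨c, i, o⟩)
  exacts [⟨none, rfl⟩, ⟨some none, rfl⟩, ⟨some (some (.inl (m, h, t, l))), rfl⟩,
    ⟨some (some (.inr (c, i, o))), rfl⟩]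

instance [Finite T] : Finite (RConn T) := by
  let f : Option (Option (T × Bool)) → RConn T
    | none => .leaf
    | some none => .node
    | some (some (c, b)) => .rule c b
  refine Finite.of_surjective f ?_
  rintro (_ | _ | ⟨c, b⟩)
  exacts [⟨none, rfl⟩, ⟨some none, rfl⟩, ⟨some (some (c, b)), rfl⟩]

/-- The mark of a data tree. -/
def mark : Val T → Bool
  | data m _ _ _ => m
  | _ => false

/-- The mark of the left subtree. -/
def hdMark : Val T → Bool
  | data _ h _ _ => h
  | _ => false

/-- The mark of the right subtree. -/
def tlMark : Val T → Bool
  | data _ _ t _ => t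
  | _ => false

/-- Whether the data tree is the leaf. -/
def lf : Val T → Bool
  | data _ _ _ l => l
  | _ => false

/-- Being the fingerprint of a data tree. -/
def IsData (x : Val T) : Prop := ∃ m h t l, x = data m h t l

/-- Being the fingerprint of a derivation for the code `c` with given input and output marks. -/
def IsDrv {T : Set Code} (x : Val T) (c : Code) (i o : Bool) : Prop :=
  ∃ d : T, d.1 = c ∧ x = drv d i o

end Val

open Val

/-- The local check of an evaluation rule: arguments `0` to `4` are data trees, the first two
being the input and the output, and arguments `5` and `6` are the premises. -/
def RuleBody {T : Set Code} : Code → Bool → (ℕ → Val T) → Prop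
  | .zero', _, a => (a 1).lf = false ∧ (a 2).lf = true ∧
      (a 1).hdMark = (a 2).mark ∧ (a 1).tlMark = (a 0).mark
  | .succ, _, a => (a 1).lf = false ∧ (a 2).lf = false ∧ (a 3).lf = true ∧
      (a 1).hdMark = (a 2).mark ∧ (a 1).tlMark = (a 3).mark ∧
      (a 2).hdMark = (a 0).hdMark ∧ (a 2).tlMark = (a 0).hdMark
  | .tail, _, a => (a 1).mark = (a 0).tlMark
  | .cons f g, _, a => (a 5).IsDrv f (a 0).mark (a 2).mark ∧ (a 6).IsDrv g (a 0).mark (a 3).mark ∧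
      (a 1).lf = false ∧ (a 1).hdMark = (a 2).hdMark ∧ (a 1).tlMark = (a 3).mark
  | .comp f g, _, a => (a 5).IsDrv g (a 0).mark (a 2).mark ∧ (a 6).IsDrv f (a 2).mark (a 1).mark
  | .case f _, false, a => (a 5).IsDrv f (a 3).mark (a 1).mark ∧
      (a 2).lf = true ∧ (a 2).mark = (a 0).hdMark ∧ (a 3).mark = (a 0).tlMark
  | .case _ g, true, a => (a 5).IsDrv g (a 3).mark (a 1).mark ∧
      (a 2).lf = false ∧ (a 2).mark = (a 0).hdMark ∧
      (a 3).lf = false ∧ (a 3).hdMark = (a 2).tlMark ∧ (a 3).tlMark = (a 0).tlMark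
  | .fix f, false, a => (a 5).IsDrv f (a 0).mark (a 2).mark ∧
      (a 3).mark = (a 2).hdMark ∧ (a 3).lf = true ∧ (a 1).mark = (a 2).tlMark
  | .fix f, true, a => (a 5).IsDrv f (a 0).mark (a 2).mark ∧
      (a 3).mark = (a 2).hdMark ∧ (a 3).lf = false ∧ (a 4).mark = (a 2).tlMark ∧
      (a 6).IsDrv (.fix f) (a 4).mark (a 1).mark

/-- The full check of an evaluation rule. -/
def RuleOK {T : Set Code} (c : Code) (b : Bool) (a : ℕ → Val T) : Prop :=
  (∀ i < 5, (a i).IsData) ∧ RuleBody c b a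

/-- The relation required between consecutive arguments of the goal connective: the second is
either the tree of the successor, or a derivation for `U` with the first as input. -/
def GoalRel {T : Set Code} (U : T) : Val T → Val T → Prop
  | .data m _ _ _, .data _ h t l => l = false ∧ h = m ∧ t = m
  | .data m _ _ _, .drv c i _ => c = U ∧ i = m
  | _, _ => False

/-- Being a leaf. -/
def GoalStart {T : Set Code} (x : Val T) : Prop := x.IsData ∧ x.lf = true

/-- Being a derivation. -/
def GoalEnd {T : Set Code} (x : Val T) : Prop := ∃ c i o, x = .drv c i o

/-- The check of the goal connective with arguments `0, …, N + 1`. -/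
def GoalOK {T : Set Code} (U : T) (N : ℕ) (a : ℕ → Val T) : Prop :=
  GoalStart (a 0) ∧ GoalEnd (a (N + 1)) ∧ ∀ i < N + 1, GoalRel U (a i) (a (i + 1))

open Classical in
/-- The value of a tree constructor or rule; `b` is the nondeterministic mark. -/
noncomputable def opConn {T : Set Code} (b : Bool) (a : ℕ → Val T) : RConn T → Val T
  | .leaf => .data b b b true
  | .node => match a 0, a 1 with
    | .data m _ _ _, .data m' _ _ _ => .data b m m' false
    | _, _ => .err
  | .rule c v => if RuleOK c.1 v a then .drv c (a 0).mark (a 1).mark else .err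

/-- Numberings of truth-values and connectives. -/
structure Coding (T : Set Code) where
  m : ℕ
  k : ℕ
  val : Val T ≃ Fin (m + 1)
  conn : RConn T ≃ Fin (k + 1)

lemma exists_equiv_fin_succ (α : Type) [Finite α] [Nonempty α] :
    ∃ n, Nonempty (α ≃ Fin (n + 1)) := by
  obtain ⟨n, ⟨e⟩⟩ := Finite.exists_equiv_fin α
  cases n with
  | zero => exact (e (Classical.arbitrary α)).elim0
  | succ n => exact ⟨n, ⟨e⟩⟩

lemma nonempty_coding (T : Set Code) [Finite T] : Nonempty (Coding T) := by
  have : Nonempty (Val T) := ⟨.err⟩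
  have : Nonempty (RConn T) := ⟨.leaf⟩
  obtain ⟨m, ⟨e⟩⟩ := exists_equiv_fin_succ (Val T)
  obtain ⟨k, ⟨r⟩⟩ := exists_equiv_fin_succ (RConn T)
  exact ⟨⟨m, k, e, r⟩⟩

namespace Coding

variable {T : Set Code} (E : Coding T) (U : T)

/-- The truth-value with number `x` modulo the number of truth-values. -/
def dec (x : ℕ) : Val T := E.val.symm (Fin.ofNat (E.m + 1) x)

/-- The connective with number `j`. -/
def decConn (j : ℕ) : RConn T := E.conn.symm (Fin.ofNat (E.k + 1) j)

/-- The argument tuple with index `idx`. -/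
def digits (idx : ℕ) : ℕ → Val T := fun i => E.dec (idx / (E.m + 1) ^ i)

/-- Extension of a finite tuple of truth-values. -/
def ext {k : ℕ} (a : Fin k → Val T) : ℕ → Val T :=
  fun i => if h : i < k then a ⟨i, h⟩ else E.dec 0

open Classical in
/-- The value of the `j`-th connective. -/
noncomputable def op (N : ℕ) (b : Bool) (a : ℕ → Val T) : ℕ → Val T
  | 0 => if GoalOK U N a then .win else .err
  | j + 1 => opConn b a (E.decConn j)

/-- The table entry listing the two possible values. -/
noncomputable def entry (N : ℕ) (a : ℕ → Val T) (j : ℕ) : List ℕ :=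
  [E.val (op E U N false a j), E.val (op E U N true a j)]

/-- The table row of a connective of arity `k`. -/
noncomputable def row (N k j : ℕ) : List (List ℕ) :=
  (List.range ((E.m + 1) ^ k)).map fun idx => E.entry U N (E.digits idx) j

/-- The arities. -/
def arities (N : ℕ) : List ℕ := (N + 2) :: List.replicate (E.k + 1) 7

/-- The table; only the row of the goal connective depends on `N`. -/
noncomputable def table (N : ℕ) : List (List (List ℕ)) :=
  E.row U N (N + 2) 0 :: (List.range (E.k + 1)).map fun j => E.row U 0 7 (j + 1)

/-- The code of the Nmatrix. -/
noncomputable def code (N : ℕ) : NMatCode :=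
  (E.arities N, E.m, E.table U N, [(E.val .win : ℕ)])

lemma entry_succ (N : ℕ) (a : ℕ → Val T) (j : ℕ) :
    E.entry U N a (j + 1) = E.entry U 0 a (j + 1) := rfl

lemma arities_get (N : ℕ) (j : ℕ) (h : j + 1 < (E.arities N).length) :
    (E.arities N).get ⟨j + 1, h⟩ = 7 := by
  simp [arities]

lemma table_getD (N : ℕ) (j : Fin (E.arities N).length) :
    (E.table U N).getD j [] = E.row U N ((E.arities N).get j) j := by
  obtain ⟨j, hj⟩ := j
  cases j with
  | zero => simp [table, arities]
  | succ j =>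
    rw [arities_get]
    have : j < E.k + 1 := by simpa [arities] using hj
    simp [table, this, row, entry_succ]

lemma digits_index {k : ℕ} (a : Fin k → Fin (E.m + 1)) :
    E.digits (∑ i, (a i : ℕ) * (E.m + 1) ^ (i : ℕ)) = E.ext fun i => E.val.symm (a i) := by
  funext i
  unfold digits ext
  split_ifs with h
  · unfold dec
    congr 1
    ext
    have := congrArg (fun f => (f ⟨i, h⟩ : ℕ)) (finFunctionFinEquiv.symm_apply_apply a)
    rw [← this, ← finFunctionFinEquiv_apply]
    rfl
  · congr 1
    apply Nat.div_eq_of_lt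
    rw [← finFunctionFinEquiv_apply]
    exact (finFunctionFinEquiv a).2.trans_le (Nat.pow_le_pow_right (by simp) (by omega))

lemma mem_interp (N : ℕ) (j : Fin (E.arities N).length)
    (a : Fin ((E.arities N).get j) → Fin (E.m + 1)) (x : Fin (E.m + 1)) :
    x ∈ (decodeNMat (E.arities N) E.m (E.table U N) [(E.val .win : ℕ)]).interp j a ↔
      ∃ b, E.val.symm x = E.op U N b (E.ext fun i => E.val.symm (a i)) j := by
  have hlt : ∑ i, (a i : ℕ) * (E.m + 1) ^ (i : ℕ) < (E.m + 1) ^ ((E.arities N).get j) := by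
    rw [← finFunctionFinEquiv_apply]
    exact (finFunctionFinEquiv a).2
  have hrow : ((E.table U N).getD j []).getD (∑ i, (a i : ℕ) * (E.m + 1) ^ (i : ℕ)) [] =
      E.entry U N (E.ext fun i => E.val.symm (a i)) j := by
    rw [table_getD, ← digits_index]
    simp only [row, List.getD_eq_getElem?_getD, List.getElem?_map, List.getElem?_range hlt,
      Option.map_some, Option.getD_some]
  have hne : ∃ y : Fin (E.m + 1),
      (y : ℕ) ∈ E.entry U N (E.ext fun i => E.val.symm (a i)) j :=
    ⟨_, List.mem_cons_self⟩
  simp only [decodeNMat]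
  rw [hrow, if_pos hne]
  simp [entry, Equiv.symm_apply_eq, Fin.ext_iff]

/-- Valuations with truth-values in `Val T`. -/
def IsVal (N : ℕ) (w : Fm (codeSig (E.arities N)) → Val T) : Prop :=
  ∀ j args, ∃ b, w (.app j args) = E.op U N b (E.ext fun i => w (args i)) j.val

lemma thmExistsProblem_code (N : ℕ) :
    thmExistsProblem (E.code U N) ↔ ∃ A, ∀ w, E.IsVal U N w → w A = .win := by
  refine exists_congr fun A => ⟨fun h w hw => ?_, fun h v hv _ => ?_⟩
  · have hv : _root_.IsVal (decodeNMat (E.arities N) E.m (E.table U N) [(E.val .win : ℕ)])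
        (fun B => E.val (w B)) := fun j args => by
      obtain ⟨b, hb⟩ := hw j args
      refine (E.mem_interp U N j _ _).2 ⟨b, ?_⟩
      simp only [Equiv.symm_apply_apply]
      exact hb
    have := List.mem_singleton.1 (h _ hv fun _ hB => hB.elim)
    exact E.val.injective (Fin.ext this)
  · have := h (fun B => E.val.symm (v B)) fun j args => (E.mem_interp U N j _ _).1 (hv j args)
    refine List.mem_singleton.2 (congrArg Fin.val ?_)
    exact E.val.symm_apply_eq.1 this

end Coding

section Computability

lemma primrecPred_of_finite {α : Type} [Primcodable α] [Finite α] (p : α → Prop) :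
    PrimrecPred p := by
  classical
  exact ⟨inferInstance, Primrec.dom_finite _⟩

lemma primrec_fin_ofNat (n : ℕ) : Primrec (Fin.ofNat (n + 1)) :=
  Primrec.fin_val_iff.1 (Primrec.nat_mod.comp Primrec.id (Primrec.const (n + 1)))

namespace Coding

variable {T : Set Code} (E : Coding T) (U : T)

lemma primrecPred_dec (p : Val T → Prop) : PrimrecPred fun x => p (E.dec x) :=
  (primrecPred_of_finite fun x => p (E.val.symm x)).comp (primrec_fin_ofNat E.m)

lemma primrecRel_dec (p : Val T → Val T → Prop) :
    PrimrecRel fun x y => p (E.dec x) (E.dec y) :=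
  (primrecPred_of_finite fun x : Fin (E.m + 1) × Fin (E.m + 1) =>
      p (E.val.symm x.1) (E.val.symm x.2)).comp
    (((primrec_fin_ofNat E.m).comp Primrec.fst).pair ((primrec_fin_ofNat E.m).comp Primrec.snd))

lemma primrec_div_pow : Primrec₂ fun i idx : ℕ => idx / (E.m + 1) ^ i :=
  Primrec.nat_div.comp Primrec.snd
    ((Primrec₂.unpaired'.1 Nat.Primrec.pow).comp (Primrec.const _) Primrec.fst)

lemma primrecRel_goalOK : PrimrecRel fun N idx => GoalOK U N (E.digits idx) := by
  refine PrimrecPred.and ?_ (PrimrecPred.and ?_ ?_)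
  · exact (E.primrecPred_dec GoalStart).comp
      (E.primrec_div_pow.comp (Primrec.const 0) Primrec.snd)
  · exact (E.primrecPred_dec GoalEnd).comp
      (E.primrec_div_pow.comp (Primrec.succ.comp Primrec.fst) Primrec.snd)
  · have h : PrimrecRel fun i idx => GoalRel U (E.digits idx i) (E.digits idx (i + 1)) :=
      (E.primrecRel_dec (GoalRel U)).comp E.primrec_div_pow
        (E.primrec_div_pow.comp (Primrec.succ.comp Primrec.fst) Primrec.snd)
    exact h.forall_lt.comp (Primrec.succ.comp Primrec.fst) Primrec.snd

lemma primrec_code : Primrec (E.code U) := by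
  classical
  have hval : Primrec₂ fun N idx : ℕ => (E.val (E.op U N false (E.digits idx) 0) : ℕ) :=
    (Primrec.ite (E.primrecRel_goalOK U) (Primrec.const (E.val .win : ℕ))
      (Primrec.const (E.val .err : ℕ))).of_eq fun p => by
        simp only [op]
        split_ifs <;> rfl
  have hentry : Primrec₂ fun N idx => E.entry U N (E.digits idx) 0 :=
    Primrec.list_cons.comp hval (Primrec.list_cons.comp hval (Primrec.const []))
  have hN : Primrec fun N : ℕ => N + 2 := Primrec.nat_add.comp Primrec.id (Primrec.const 2)
  have hrow : Primrec fun N => E.row U N (N + 2) 0 :=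
    Primrec.list_map (Primrec.list_range.comp
      ((Primrec₂.unpaired'.1 Nat.Primrec.pow).comp (Primrec.const _) hN)) hentry
  exact (Primrec.list_cons.comp hN (Primrec.const _)).pair
    ((Primrec.const _).pair
      ((Primrec.list_cons.comp hrow (Primrec.const _)).pair (Primrec.const _)))

end Coding

end Computability

section Soundness

/-- The fingerprint of the tree `t` determined by the marking `S`. -/
def fingerprint {T : Type} (S : BT → Bool) (t : BT) : Val T :=
  .data (S t) (S t.hd) (S t.tl) t.isLeaf

/-- A family of truth-values indexed by markings which, if it consists of derivation
fingerprints, is the family of fingerprints of an actual derivation. -/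
def Premise {T : Set Code} (X : (BT → Bool) → Val T) : Prop :=
  (∀ S, ∃ c i o, X S = .drv c i o) →
    ∃ (c : T) (x y : BT), Ev c.1 x y ∧ ∀ S, X S = .drv c (S x) (S y)

lemma Premise.ev {T : Set Code} {X : (BT → Bool) → Val T} (hX : Premise X) {c : Code} {x y : BT}
    (h : ∀ S, (X S).IsDrv c (S x) (S y)) : Ev c x y := by
  obtain ⟨c', x', y', hev, heq⟩ := hX fun S => by
    obtain ⟨d, -, hd⟩ := h S
    exact ⟨_, _, _, hd⟩
  have key : ∀ S : BT → Bool, c'.1 = c ∧ S x' = S x ∧ S y' = S y := fun S => by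
    obtain ⟨d, hdc, hd⟩ := h S
    rw [heq S] at hd
    injection hd with h₁ h₂ h₃
    exact ⟨h₁ ▸ hdc, h₂, h₃⟩
  obtain rfl := (key fun _ => true).1
  obtain rfl := eq_of_forall_mark fun S => (key S).2.1
  obtain rfl := eq_of_forall_mark fun S => (key S).2.2
  exact hev

lemma ruleBody_sound {T : Set Code} {c : Code} {b : Bool} {a : (BT → Bool) → ℕ → Val T}
    {t : ℕ → BT} (ha : ∀ S, ∀ i < 5, a S i = fingerprint S (t i))
    (h₅ : Premise fun S => a S 5) (h₆ : Premise fun S => a S 6)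
    (h : ∀ S, RuleBody c b (a S)) : Ev c (t 0) (t 1) := by
  have ha0 := fun S => ha S 0 (by decide)
  have ha1 := fun S => ha S 1 (by decide)
  have ha2 := fun S => ha S 2 (by decide)
  have ha3 := fun S => ha S 3 (by decide)
  have ha4 := fun S => ha S 4 (by decide)
  cases c with
  | zero' =>
    simp only [RuleBody, ha0, ha1, ha2, fingerprint, mark, hdMark, tlMark, lf, forall_and,
      forall_const] at h
    obtain ⟨h1, h2, h3, h4⟩ := h
    rw [eq_node h1, eq_of_forall_mark h3, eq_of_forall_mark h4, eq_leaf h2]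
    exact .zero' _
  | succ =>
    simp only [RuleBody, ha0, ha1, ha2, ha3, fingerprint, mark, hdMark, tlMark, lf, forall_and,
      forall_const] at h
    obtain ⟨h1, h2, h3, h4, h5, h6, h7⟩ := h
    rw [eq_node h1, eq_of_forall_mark h4, eq_of_forall_mark h5, eq_leaf h3, eq_node h2,
      eq_of_forall_mark h6, eq_of_forall_mark h7]
    exact .succ _
  | tail =>
    simp only [RuleBody, ha0, ha1, fingerprint, mark, tlMark] at h
    rw [eq_of_forall_mark h]
    exact .tail _
  | cons f g =>
    simp only [RuleBody, ha0, ha1, ha2, ha3, fingerprint, mark, hdMark, tlMark, lf, forall_and,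
      forall_const] at h
    obtain ⟨h1, h2, h3, h4, h5⟩ := h
    rw [eq_node h3, eq_of_forall_mark h4, eq_of_forall_mark h5]
    exact .cons (h₅.ev h1) (h₆.ev h2)
  | comp f g =>
    simp only [RuleBody, ha0, ha1, ha2, fingerprint, mark, forall_and] at h
    exact .comp (h₅.ev h.1) (h₆.ev h.2)
  | case f g =>
    cases b with
    | false =>
      simp only [RuleBody, ha0, ha1, ha2, ha3, fingerprint, mark, hdMark, tlMark, lf, forall_and,
        forall_const] at h
      obtain ⟨h1, h2, h3, h4⟩ := h
      have hev := h₅.ev h1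
      rw [eq_of_forall_mark h4] at hev
      exact .case_zero (eq_of_forall_mark h3 ▸ h2) hev
    | true =>
      simp only [RuleBody, ha0, ha1, ha2, ha3, fingerprint, mark, hdMark, tlMark, lf, forall_and,
        forall_const] at h
      obtain ⟨h1, h2, h3, h4, h5, h6⟩ := h
      have hev := h₅.ev h1
      rw [eq_node h4, eq_of_forall_mark h5, eq_of_forall_mark h6, eq_of_forall_mark h3] at hev
      exact .case_succ (eq_of_forall_mark h3 ▸ h2) hev
  | fix f =>
    cases b with
    | false =>
      simp only [RuleBody, ha0, ha1, ha2, ha3, fingerprint, mark, hdMark, tlMark, lf, forall_and,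
        forall_const] at h
      obtain ⟨h1, h2, h3, h4⟩ := h
      rw [eq_of_forall_mark h4]
      exact .fix_zero (h₅.ev h1) (eq_of_forall_mark h2 ▸ h3)
    | true =>
      simp only [RuleBody, ha0, ha1, ha2, ha3, ha4, fingerprint, mark, hdMark, tlMark, lf,
        forall_and, forall_const] at h
      obtain ⟨h1, h2, h3, h4, h5⟩ := h
      have hev := h₆.ev h5
      rw [eq_of_forall_mark h4] at hev
      exact .fix_succ (h₅.ev h1) (eq_of_forall_mark h2 ▸ h3) hev

namespace Coding

variable {T : Set Code} (E : Coding T) (U : T) {N : ℕ}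

/-- The `i`-th immediate subformula, with a default. -/
def nthArg {Sg : Signature} {k : ℕ} (args : Fin k → Fm Sg) (i : ℕ) : Fm Sg :=
  if h : i < k then args ⟨i, h⟩ else .var 0

lemma ext_eq_nthArg {Sg : Signature} {k : ℕ} (args : Fin k → Fm Sg) (w : Fm Sg → Val T) {i : ℕ}
    (h : i < k) : E.ext (fun x => w (args x)) i = w (nthArg args i) := by
  simp [ext, nthArg, h]

/-- The tree denoted by a formula, with a default value. -/
def toTree : Fm (codeSig (E.arities N)) → BT
  | .var _ => .leaf
  | .app j args =>
    let t : ℕ → BT := fun i => if h : i < _ then toTree (args ⟨i, h⟩) else .leaf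
    match (j : ℕ) with
    | 0 => .leaf
    | j + 1 => match E.decConn j with
      | .node => .node (t 0) (t 1)
      | _ => .leaf

/-- The valuation in which a formula denoting the tree `t` is marked according to `S t`. -/
noncomputable def canon (S : BT → Bool) : Fm (codeSig (E.arities N)) → Val T
  | .var _ => .err
  | .app j args => E.op U N (S (E.toTree (.app j args))) (E.ext fun i => canon S (args i)) j

lemma isVal_canon (S : BT → Bool) : E.IsVal U N (E.canon U S) :=
  fun _ _ => ⟨_, by rw [canon]⟩

open Classical in
lemma canon_app_zero (S : BT → Bool) (h : 0 < (E.arities N).length)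
    (args : Fin ((E.arities N).get ⟨0, h⟩) → Fm (codeSig (E.arities N))) :
    E.canon U S (.app ⟨0, h⟩ args) =
      if GoalOK U N (E.ext fun i => E.canon U S (args i)) then .win else .err := by
  rw [canon]
  rfl

lemma canon_app_succ (S : BT → Bool) {j : ℕ} (h : j + 1 < (E.arities N).length)
    (args : Fin ((E.arities N).get ⟨j + 1, h⟩) → Fm (codeSig (E.arities N))) :
    E.canon U S (.app ⟨j + 1, h⟩ args) =
      opConn (S (E.toTree (.app ⟨j + 1, h⟩ args))) (E.ext fun i => E.canon U S (args i))
        (E.decConn j) := by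
  rw [canon]
  rfl

lemma toTree_leaf {j : ℕ} (h : j + 1 < (E.arities N).length)
    (args : Fin ((E.arities N).get ⟨j + 1, h⟩) → Fm (codeSig (E.arities N)))
    (hj : E.decConn j = .leaf) : E.toTree (.app ⟨j + 1, h⟩ args) = .leaf := by
  simp [toTree, hj]

lemma toTree_node {j : ℕ} (h : j + 1 < (E.arities N).length)
    (args : Fin ((E.arities N).get ⟨j + 1, h⟩) → Fm (codeSig (E.arities N)))
    (hj : E.decConn j = .node) : E.toTree (.app ⟨j + 1, h⟩ args) =
      .node (E.toTree (nthArg args 0)) (E.toTree (nthArg args 1)) := by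
  have h7 := E.arities_get N j h
  have h0 : 0 < (E.arities N).get ⟨j + 1, h⟩ := by omega
  have h1 : 1 < (E.arities N).get ⟨j + 1, h⟩ := by omega
  simp only [toTree, hj, nthArg, dif_pos h0, dif_pos h1]

lemma canon_eq_fingerprint (A : Fm (codeSig (E.arities N))) :
    ∀ S, (E.canon U S A).IsData → E.canon U S A = fingerprint S (E.toTree A) := by
  classical
  induction A with
  | var n =>
    rintro S ⟨_, _, _, _, h⟩
    simp [canon] at h
  | app j args ih =>
    rintro S ⟨m, h, t, l, hd⟩
    obtain ⟨j, hj⟩ := j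
    cases j with
    | zero =>
      rw [canon_app_zero] at hd
      split_ifs at hd
    | succ j =>
      have h7 : (codeSig (E.arities N)).arity ⟨j + 1, hj⟩ = 7 := E.arities_get N j hj
      rw [canon_app_succ] at hd ⊢
      have ih' : ∀ i < 7, (E.canon U S (nthArg args i)).IsData →
          E.canon U S (nthArg args i) = fingerprint S (E.toTree (nthArg args i)) := by
        intro i hi
        rw [nthArg, dif_pos (hi.trans_eq h7.symm)]
        exact ih _ S
      have hext : ∀ i < 7, (E.ext fun i => E.canon U S (args i)) i =
          E.canon U S (nthArg args i) := fun i hi => E.ext_eq_nthArg _ _ (hi.trans_eq h7.symm)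
      cases hc : E.decConn j with
      | leaf =>
        rw [E.toTree_leaf hj args hc]
        rfl
      | node =>
        rw [hc] at hd
        rw [E.toTree_node hj args hc]
        simp only [opConn, hext 0 (by decide), hext 1 (by decide)] at hd ⊢
        split at hd
        · next m₀ _ _ _ m₁ _ _ _ h₀ h₁ =>
          have e₀ := h₀.symm.trans (ih' 0 (by decide) ⟨_, _, _, _, h₀⟩)
          have e₁ := h₁.symm.trans (ih' 1 (by decide) ⟨_, _, _, _, h₁⟩)
          simp only [fingerprint, data.injEq] at e₀ e₁
          rw [e₀.1, e₁.1]
          rfl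
        · cases hd
      | rule c b =>
        rw [hc] at hd
        simp only [opConn] at hd
        split_ifs at hd

lemma premise_canon (A : Fm (codeSig (E.arities N))) : Premise fun S => E.canon U S A := by
  classical
  induction A with
  | var n =>
    intro h
    obtain ⟨_, _, _, h⟩ := h fun _ => true
    simp [canon] at h
  | app j args ih =>
    obtain ⟨j, hj⟩ := j
    intro h
    cases j with
    | zero =>
      obtain ⟨_, _, _, h⟩ := h fun _ => true
      simp only [canon_app_zero] at h
      split_ifs at h
    | succ j =>
      have h7 : (codeSig (E.arities N)).arity ⟨j + 1, hj⟩ = 7 := E.arities_get N j hj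
      have ih' : ∀ i < 7, Premise fun S => E.canon U S (nthArg args i) := by
        intro i hi
        rw [nthArg, dif_pos (hi.trans_eq h7.symm)]
        exact ih _
      have hext : ∀ S, ∀ i < 7, (E.ext fun i => E.canon U S (args i)) i =
          E.canon U S (nthArg args i) := fun S i hi => E.ext_eq_nthArg _ _ (hi.trans_eq h7.symm)
      simp only [canon_app_succ] at h ⊢
      cases hc : E.decConn j with
      | leaf =>
        obtain ⟨_, _, _, h⟩ := h fun _ => true
        rw [hc] at h
        cases h
      | node =>
        obtain ⟨_, _, _, h⟩ := h fun _ => true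
        rw [hc] at h
        simp only [opConn] at h
        split at h <;> cases h
      | rule c b =>
        have hok : ∀ S, RuleOK c.1 b (E.ext fun i => E.canon U S (args i)) := fun S => by
          obtain ⟨_, _, _, h⟩ := h S
          rw [hc] at h
          by_contra hno
          simp only [opConn] at h
          cases (if_neg hno).symm.trans h
        have ha : ∀ S, ∀ i < 5, (E.ext fun i => E.canon U S (args i)) i =
            fingerprint S (E.toTree (nthArg args i)) := fun S i hi => by
          have hd := (hok S).1 i hi
          rw [hext S i (by omega)] at hd ⊢
          exact E.canon_eq_fingerprint U _ S hd
        refine ⟨c, _, _, ruleBody_sound (t := fun i => E.toTree (nthArg args i)) ha ?_ ?_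
          fun S => (hok S).2, fun S => ?_⟩
        · simpa only [hext _ 5 (by decide)] using ih' 5 (by decide)
        · simpa only [hext _ 6 (by decide)] using ih' 6 (by decide)
        · simp only [opConn, if_pos (hok S)]
          rw [ha S 0 (by decide), ha S 1 (by decide)]
          rfl

lemma goalRel_left {x y : Val T} (h : GoalRel U x y) : x.IsData := by
  cases x with
  | data m a t l => exact ⟨m, a, t, l, rfl⟩
  | err => exact h.elim
  | win => exact h.elim
  | drv c i o => exact h.elim

/-- If a formula is designated by all canonical valuations, then evaluation terminates. -/
lemma exists_ev_of_canon {A : Fm (codeSig (E.arities N))}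
    (h : ∀ S, E.canon U S A = .win) : ∃ y, Ev U.1 (ofNat N) y := by
  classical
  cases A with
  | var n =>
    have := h fun _ => true
    simp [canon] at this
  | app j args =>
    obtain ⟨j, hj⟩ := j
    cases j with
    | succ j =>
      have := h fun _ => true
      rw [canon_app_succ] at this
      cases hc : E.decConn j <;> rw [hc] at this <;> simp only [opConn] at this
      · cases this
      · split at this <;> cases this
      · split_ifs at this
    | zero =>
      have hok : ∀ S, GoalOK U N (E.ext fun i => E.canon U S (args i)) := fun S => by
        have := h S
        rw [canon_app_zero] at this
        by_contra hno
        cases (if_neg hno).symm.trans this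
      have hext : ∀ S, ∀ i < N + 2, (E.ext fun i => E.canon U S (args i)) i =
          E.canon U S (nthArg args i) := fun S i hi => E.ext_eq_nthArg _ _ hi
      have hdata : ∀ S, ∀ i < N + 1, E.canon U S (nthArg args i) =
          fingerprint S (E.toTree (nthArg args i)) := fun S i hi => by
        refine E.canon_eq_fingerprint U _ S ?_
        rw [← hext S i (by omega)]
        exact goalRel_left U ((hok S).2.2 i hi)
      have htree : ∀ i < N + 1, E.toTree (nthArg args i) = ofNat i := by
        intro i
        induction i with
        | zero =>
          intro hi
          have := (hok fun _ => true).1.2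
          rw [hext _ 0 (by omega), hdata _ 0 hi] at this
          exact eq_leaf this
        | succ i ih =>
          intro hi
          have hrel : ∀ S : BT → Bool, (E.toTree (nthArg args (i + 1))).isLeaf = false ∧
              S (E.toTree (nthArg args (i + 1))).hd = S (ofNat i) ∧
              S (E.toTree (nthArg args (i + 1))).tl = S (ofNat i) := fun S => by
            have := (hok S).2.2 i (by omega)
            rw [hext S i (by omega), hext S (i + 1) (by omega), hdata S i (by omega),
              hdata S (i + 1) hi, ih (by omega)] at this
            exact this
          rw [eq_node (hrel fun _ => true).1, eq_of_forall_mark fun S => (hrel S).2.1,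
            eq_of_forall_mark fun S => (hrel S).2.2, ofNat]
      obtain ⟨c, x, y, hev, heq⟩ := E.premise_canon U (nthArg args (N + 1)) fun S => by
        have := (hok S).2.1
        rwa [hext S (N + 1) (by omega)] at this
      have hrel : ∀ S : BT → Bool, c = U ∧ S x = S (ofNat N) := fun S => by
        have := (hok S).2.2 N (by omega)
        rw [hext S N (by omega), hext S (N + 1) (by omega), hdata S N (by omega),
          htree N (by omega)] at this
        rw [show E.canon U S (nthArg args (N + 1)) = _ from heq S] at this
        exact this
      obtain rfl := (hrel fun _ => true).1
      rw [← eq_of_forall_mark fun S => (hrel S).2]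
      exact ⟨y, hev⟩

end Coding

end Soundness

section Completeness

/-- Closure under immediate subcodes. -/
structure Closed (T : Set Code) : Prop where
  cons : ∀ {f g}, Code.cons f g ∈ T → f ∈ T ∧ g ∈ T
  comp : ∀ {f g}, Code.comp f g ∈ T → f ∈ T ∧ g ∈ T
  case : ∀ {f g}, Code.case f g ∈ T → f ∈ T ∧ g ∈ T
  fix : ∀ {f}, Code.fix f ∈ T → f ∈ T

/-- The set of subcodes of a code. -/
def subcodes : Code → Set Code
  | .zero' => {.zero'}
  | .succ => {.succ}
  | .tail => {.tail}
  | .cons f g => insert (.cons f g) (subcodes f ∪ subcodes g)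
  | .comp f g => insert (.comp f g) (subcodes f ∪ subcodes g)
  | .case f g => insert (.case f g) (subcodes f ∪ subcodes g)
  | .fix f => insert (.fix f) (subcodes f)

lemma mem_subcodes (c : Code) : c ∈ subcodes c := by
  cases c <;> simp [subcodes]

lemma finite_subcodes (c : Code) : (subcodes c).Finite := by
  induction c with
  | zero' => exact Set.finite_singleton _
  | succ => exact Set.finite_singleton _
  | tail => exact Set.finite_singleton _
  | cons f g hf hg => exact (hf.union hg).insert _
  | comp f g hf hg => exact (hf.union hg).insert _
  | case f g hf hg => exact (hf.union hg).insert _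
  | fix f hf => exact hf.insert _

lemma closed_union {T T' : Set Code} (h : Closed T) (h' : Closed T') : Closed (T ∪ T') where
  cons := fun hc => hc.elim (fun hc => (h.cons hc).imp .inl .inl)
    fun hc => (h'.cons hc).imp .inr .inr
  comp := fun hc => hc.elim (fun hc => (h.comp hc).imp .inl .inl)
    fun hc => (h'.comp hc).imp .inr .inr
  case := fun hc => hc.elim (fun hc => (h.case hc).imp .inl .inl)
    fun hc => (h'.case hc).imp .inr .inr
  fix := fun hc => hc.imp h.fix h'.fix

lemma closed_subcodes (c : Code) : Closed (subcodes c) := by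
  induction c with
  | zero' => constructor <;> simp [subcodes]
  | succ => constructor <;> simp [subcodes]
  | tail => constructor <;> simp [subcodes]
  | cons f g hf hg =>
    have h := closed_union hf hg
    have hmem : f ∈ subcodes f ∪ subcodes g ∧ g ∈ subcodes f ∪ subcodes g :=
      ⟨.inl (mem_subcodes f), .inr (mem_subcodes g)⟩
    constructor <;> simp only [subcodes, Set.mem_insert_iff]
    · rintro f' g' (⟨⟨⟩⟩ | hc)
      exacts [hmem.imp .inr .inr, (h.cons hc).imp .inr .inr]
    · rintro f' g' (⟨⟨⟩⟩ | hc)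
      exact (h.comp hc).imp .inr .inr
    · rintro f' g' (⟨⟨⟩⟩ | hc)
      exact (h.case hc).imp .inr .inr
    · rintro f' (⟨⟨⟩⟩ | hc)
      exact .inr (h.fix hc)
  | comp f g hf hg =>
    have h := closed_union hf hg
    have hmem : f ∈ subcodes f ∪ subcodes g ∧ g ∈ subcodes f ∪ subcodes g :=
      ⟨.inl (mem_subcodes f), .inr (mem_subcodes g)⟩
    constructor <;> simp only [subcodes, Set.mem_insert_iff]
    · rintro f' g' (⟨⟨⟩⟩ | hc)
      exact (h.cons hc).imp .inr .inr
    · rintro f' g' (⟨⟨⟩⟩ | hc)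
      exacts [hmem.imp .inr .inr, (h.comp hc).imp .inr .inr]
    · rintro f' g' (⟨⟨⟩⟩ | hc)
      exact (h.case hc).imp .inr .inr
    · rintro f' (⟨⟨⟩⟩ | hc)
      exact .inr (h.fix hc)
  | case f g hf hg =>
    have h := closed_union hf hg
    have hmem : f ∈ subcodes f ∪ subcodes g ∧ g ∈ subcodes f ∪ subcodes g :=
      ⟨.inl (mem_subcodes f), .inr (mem_subcodes g)⟩
    constructor <;> simp only [subcodes, Set.mem_insert_iff]
    · rintro f' g' (⟨⟨⟩⟩ | hc)
      exact (h.cons hc).imp .inr .inr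
    · rintro f' g' (⟨⟨⟩⟩ | hc)
      exact (h.comp hc).imp .inr .inr
    · rintro f' g' (⟨⟨⟩⟩ | hc)
      exacts [hmem.imp .inr .inr, (h.case hc).imp .inr .inr]
    · rintro f' (⟨⟨⟩⟩ | hc)
      exact .inr (h.fix hc)
  | fix f h =>
    constructor <;> simp only [subcodes, Set.mem_insert_iff]
    · rintro f' g' (⟨⟨⟩⟩ | hc)
      exact (h.cons hc).imp .inr .inr
    · rintro f' g' (⟨⟨⟩⟩ | hc)
      exact (h.comp hc).imp .inr .inr
    · rintro f' g' (⟨⟨⟩⟩ | hc)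
      exact (h.case hc).imp .inr .inr
    · rintro f' (⟨⟨⟩⟩ | hc)
      exacts [.inr (mem_subcodes _), .inr (h.fix hc)]

namespace Coding

variable {T : Set Code} (E : Coding T) (U : T) {N : ℕ}

lemma conn_succ_lt (c : RConn T) : (E.conn c : ℕ) + 1 < (E.arities N).length := by
  simpa [arities, -Fin.is_lt] using (E.conn c).isLt

/-- The application of a tree constructor or rule to the first seven members of a family. -/
def mkRule (c : RConn T) (f : ℕ → Fm (codeSig (E.arities N))) : Fm (codeSig (E.arities N)) :=
  .app ⟨E.conn c + 1, E.conn_succ_lt c⟩ fun i => f i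

lemma decConn_conn (c : RConn T) : E.decConn (E.conn c) = c := by
  simp [decConn]

variable {E U} in
lemma IsVal.mkRule {w : Fm (codeSig (E.arities N)) → Val T} (hw : E.IsVal U N w) (c : RConn T)
    (f : ℕ → Fm (codeSig (E.arities N))) :
    ∃ b a, (∀ i < 7, a i = w (f i)) ∧ w (E.mkRule c f) = opConn b a c := by
  obtain ⟨b, hb⟩ := hw ⟨E.conn c + 1, E.conn_succ_lt c⟩ fun i => f i
  refine ⟨b, _, fun i hi => ?_, hb.trans (congrArg (opConn b _) (E.decConn_conn c))⟩
  exact dif_pos (hi.trans_eq (E.arities_get N _ (E.conn_succ_lt c)).symm)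

/-- A formula denoting a tree. -/
def treeFm : BT → Fm (codeSig (E.arities N))
  | .leaf => E.mkRule .leaf fun _ => .var 0
  | .node a b => E.mkRule .node fun i => if i = 0 then treeFm a else treeFm b

/-- The marking of trees induced by a valuation. -/
def marking (w : Fm (codeSig (E.arities N)) → Val T) (t : BT) : Bool := (w (E.treeFm t)).mark

variable {E U} in
lemma IsVal.treeFm {w : Fm (codeSig (E.arities N)) → Val T} (hw : E.IsVal U N w) (t : BT) :
    w (E.treeFm t) = fingerprint (E.marking w) t := by
  induction t with
  | leaf =>
    obtain ⟨b, a, -, h⟩ := hw.mkRule .leaf fun _ => .var 0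
    have h' : w (E.treeFm .leaf) = .data b b b true := h
    simp only [fingerprint, marking, hd, tl, isLeaf, h', mark]
  | node t₁ t₂ ih₁ ih₂ =>
    obtain ⟨b, a, ha, h⟩ := hw.mkRule .node fun i => if i = 0 then E.treeFm t₁ else E.treeFm t₂
    have h₀ := (ha 0 (by decide)).trans ih₁
    have h₁ := (ha 1 (by decide)).trans ih₂
    have h' : w (E.treeFm (.node t₁ t₂)) =
        .data b (E.marking w t₁) (E.marking w t₂) false := by
      refine h.trans ?_
      simp only [opConn, h₀, h₁, fingerprint]
    rw [h']
    simp only [fingerprint, hd, tl, isLeaf]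
    simp only [marking, h', mark]

/-- The arguments of a rule: five trees and two premises. -/
def ruleArgs (x y t₂ t₃ t₄ : BT) (d₁ d₂ : Fm (codeSig (E.arities N))) :
    ℕ → Fm (codeSig (E.arities N))
  | 0 => E.treeFm x
  | 1 => E.treeFm y
  | 2 => E.treeFm t₂
  | 3 => E.treeFm t₃
  | 4 => E.treeFm t₄
  | 5 => d₁
  | _ => d₂

/-- The formula applying a rule to five trees and two premises. -/
def ruleFm (c : T) (b : Bool) (x y t₂ t₃ t₄ : BT) (d₁ d₂ : Fm (codeSig (E.arities N))) :
    Fm (codeSig (E.arities N)) :=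
  E.mkRule (.rule c b) (E.ruleArgs x y t₂ t₃ t₄ d₁ d₂)

variable {E U} in
lemma IsVal.ruleFm {w : Fm (codeSig (E.arities N)) → Val T} (hw : E.IsVal U N w) {c : Code}
    (hc : c ∈ T) {b : Bool} {x y t₂ t₃ t₄ : BT} {d₁ d₂ : Fm (codeSig (E.arities N))}
    (h : ∀ a : ℕ → Val T, a 0 = fingerprint (E.marking w) x → a 1 = fingerprint (E.marking w) y →
      a 2 = fingerprint (E.marking w) t₂ → a 3 = fingerprint (E.marking w) t₃ →
      a 4 = fingerprint (E.marking w) t₄ → a 5 = w d₁ → a 6 = w d₂ → RuleBody c b a) :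
    (w (E.ruleFm ⟨c, hc⟩ b x y t₂ t₃ t₄ d₁ d₂)).IsDrv c (E.marking w x) (E.marking w y) := by
  obtain ⟨b', a, ha, heq⟩ := hw.mkRule (.rule ⟨c, hc⟩ b)
    (E.ruleArgs x y t₂ t₃ t₄ d₁ d₂)
  have h₀ := (ha 0 (by decide)).trans (hw.treeFm x)
  have h₁ := (ha 1 (by decide)).trans (hw.treeFm y)
  have h₂ := (ha 2 (by decide)).trans (hw.treeFm t₂)
  have h₃ := (ha 3 (by decide)).trans (hw.treeFm t₃)
  have h₄ := (ha 4 (by decide)).trans (hw.treeFm t₄)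
  have hok : RuleOK c b a := by
    refine ⟨fun i hi => ?_, h a h₀ h₁ h₂ h₃ h₄ (ha 5 (by decide)) (ha 6 (by decide))⟩
    interval_cases i
    exacts [⟨_, _, _, _, h₀⟩, ⟨_, _, _, _, h₁⟩, ⟨_, _, _, _, h₂⟩, ⟨_, _, _, _, h₃⟩,
      ⟨_, _, _, _, h₄⟩]
  refine ⟨⟨c, hc⟩, rfl, heq.trans ?_⟩
  simp only [opConn, if_pos hok, h₀, h₁]
  rfl

/-- Every evaluation has a derivation formula. -/
lemma exists_drv_of_ev (hT : Closed T) {c : Code} {x y : BT} (h : Ev c x y) :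
    c ∈ T → ∃ A : Fm (codeSig (E.arities N)), ∀ w, E.IsVal U N w →
      (w A).IsDrv c (E.marking w x) (E.marking w y) := by
  induction h with
  | zero' v =>
    refine fun hc => ⟨E.ruleFm ⟨_, hc⟩ false v _ .leaf .leaf .leaf (.var 0) (.var 0),
      fun w hw => hw.ruleFm hc fun a h₀ h₁ h₂ h₃ h₄ h₅ h₆ => ?_⟩
    simp only [RuleBody, h₀, h₁, h₂]
    exact ⟨rfl, rfl, rfl, rfl⟩
  | succ v =>
    refine fun hc => ⟨E.ruleFm ⟨_, hc⟩ false v _ (.node v.hd v.hd) .leaf .leaf (.var 0) (.var 0),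
      fun w hw => hw.ruleFm hc fun a h₀ h₁ h₂ h₃ h₄ h₅ h₆ => ?_⟩
    simp only [RuleBody, h₀, h₁, h₂, h₃]
    exact ⟨rfl, rfl, rfl, rfl, rfl, rfl, rfl⟩
  | tail v =>
    refine fun hc => ⟨E.ruleFm ⟨_, hc⟩ false v _ .leaf .leaf .leaf (.var 0) (.var 0),
      fun w hw => hw.ruleFm hc fun a h₀ h₁ h₂ h₃ h₄ h₅ h₆ => ?_⟩
    simp only [RuleBody, h₀, h₁]
    rfl
  | @cons f g v s t _ _ ih₁ ih₂ =>
    intro hc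
    obtain ⟨d₁, hd₁⟩ := ih₁ (hT.cons hc).1
    obtain ⟨d₂, hd₂⟩ := ih₂ (hT.cons hc).2
    refine ⟨E.ruleFm ⟨_, hc⟩ false v _ s t .leaf d₁ d₂,
      fun w hw => hw.ruleFm hc fun a h₀ h₁ h₂ h₃ h₄ h₅ h₆ => ?_⟩
    simp only [RuleBody, h₀, h₁, h₂, h₃, h₅, h₆]
    exact ⟨hd₁ w hw, hd₂ w hw, rfl, rfl, rfl⟩
  | @comp f g v u z _ _ ih₁ ih₂ =>
    intro hc
    obtain ⟨d₁, hd₁⟩ := ih₁ (hT.comp hc).2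
    obtain ⟨d₂, hd₂⟩ := ih₂ (hT.comp hc).1
    refine ⟨E.ruleFm ⟨_, hc⟩ false v _ u .leaf .leaf d₁ d₂,
      fun w hw => hw.ruleFm hc fun a h₀ h₁ h₂ h₃ h₄ h₅ h₆ => ?_⟩
    simp only [RuleBody, h₀, h₁, h₂, h₅, h₆]
    exact ⟨hd₁ w hw, hd₂ w hw⟩
  | @case_zero f g v z h _ ih =>
    intro hc
    obtain ⟨d, hd⟩ := ih (hT.case hc).1
    refine ⟨E.ruleFm ⟨_, hc⟩ false v _ v.hd v.tl .leaf d (.var 0),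
      fun w hw => hw.ruleFm hc fun a h₀ h₁ h₂ h₃ h₄ h₅ h₆ => ?_⟩
    simp only [RuleBody, h₀, h₁, h₂, h₃, h₅]
    exact ⟨hd w hw, h, rfl, rfl⟩
  | @case_succ f g v z h _ ih =>
    intro hc
    obtain ⟨d, hd⟩ := ih (hT.case hc).2
    refine ⟨E.ruleFm ⟨_, hc⟩ true v _ v.hd (.node v.hd.tl v.tl) .leaf d (.var 0),
      fun w hw => hw.ruleFm hc fun a h₀ h₁ h₂ h₃ h₄ h₅ h₆ => ?_⟩
    simp only [RuleBody, h₀, h₁, h₂, h₃, h₅]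
    exact ⟨hd w hw, h, rfl, rfl, rfl, rfl⟩
  | @fix_zero f v z _ h ih =>
    intro hc
    obtain ⟨d, hd⟩ := ih (hT.fix hc)
    refine ⟨E.ruleFm ⟨_, hc⟩ false v _ z z.hd .leaf d (.var 0),
      fun w hw => hw.ruleFm hc fun a h₀ h₁ h₂ h₃ h₄ h₅ h₆ => ?_⟩
    simp only [RuleBody, h₀, h₁, h₂, h₃, h₅]
    exact ⟨hd w hw, rfl, h, rfl⟩
  | @fix_succ f v z u _ h _ ih₁ ih₂ =>
    intro hc
    obtain ⟨d₁, hd₁⟩ := ih₁ (hT.fix hc)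
    obtain ⟨d₂, hd₂⟩ := ih₂ hc
    refine ⟨E.ruleFm ⟨_, hc⟩ true v _ z z.hd z.tl d₁ d₂,
      fun w hw => hw.ruleFm hc fun a h₀ h₁ h₂ h₃ h₄ h₅ h₆ => ?_⟩
    simp only [RuleBody, h₀, h₁, h₂, h₃, h₄, h₅, h₆]
    exact ⟨hd₁ w hw, rfl, h, rfl, hd₂ w hw⟩

/-- If evaluation terminates, then some formula is designated by all valuations. -/
lemma exists_win_of_ev (hT : Closed T) {y : BT} (h : Ev U.1 (ofNat N) y) :
    ∃ A, ∀ w, E.IsVal U N w → w A = .win := by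
  obtain ⟨D, hD⟩ := E.exists_drv_of_ev U (N := N) hT h U.2
  let f : ℕ → Fm (codeSig (E.arities N)) := fun i => if i ≤ N then E.treeFm (ofNat i) else D
  refine ⟨.app ⟨0, by simp [arities]⟩ fun i => f i, fun w hw => ?_⟩
  obtain ⟨b, hb⟩ := hw ⟨0, by simp [arities]⟩ fun i => f i
  refine hb.trans (if_pos ?_)
  have hext : ∀ i < N + 2, E.ext (k := N + 2) (fun i => w (f i)) i = w (f i) :=
    fun i hi => by simp [ext, hi]
  have hext' : ∀ i < N + 1, E.ext (k := N + 2) (fun i => w (f i)) i =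
      fingerprint (E.marking w) (ofNat i) := fun i hi => by
    rw [hext i (by omega), ← hw.treeFm]
    simp only [f, if_pos (Nat.lt_succ_iff.1 hi)]
  obtain ⟨d, hdU, hd⟩ := hD w hw
  have hlast : E.ext (k := N + 2) (fun i => w (f i)) (N + 1) =
      .drv U (E.marking w (ofNat N)) (E.marking w y) := by
    rw [hext _ (by omega), ← Subtype.ext hdU, ← hd]
    simp [f]
  change GoalOK U N (E.ext (k := N + 2) fun i => w (f i))
  refine ⟨?_, ⟨_, _, _, hlast⟩, fun i hi => ?_⟩
  · rw [hext' 0 (by omega)]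
    exact ⟨⟨_, _, _, _, rfl⟩, rfl⟩
  · rw [hext' i hi]
    obtain hi' | rfl := Nat.lt_or_eq_of_le (Nat.lt_succ_iff.1 hi)
    · rw [hext' (i + 1) (by omega)]
      exact ⟨rfl, rfl, rfl⟩
    · rw [hlast]
      exact ⟨rfl, rfl⟩

lemma thmExistsProblem_code_iff_ev (hT : Closed T) (N : ℕ) :
    thmExistsProblem (E.code U N) ↔ ∃ y, Ev U.1 (ofNat N) y := by
  rw [thmExistsProblem_code]
  exact ⟨fun ⟨_, hA⟩ => E.exists_ev_of_canon U fun S => hA _ (E.isVal_canon U S),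
    fun ⟨_, hy⟩ => E.exists_win_of_ev U hT hy⟩

end Coding

end Completeness

lemma not_computablePred_thmExistsProblem : ¬ ComputablePred thmExistsProblem := by
  intro h
  obtain ⟨U, hU⟩ := exists_code_halting
  have := (finite_subcodes U).to_subtype
  obtain ⟨E⟩ := nonempty_coding (subcodes U)
  let u : subcodes U := ⟨U, mem_subcodes U⟩
  have hf : Computable fun c : Nat.Partrec.Code => E.code u (Encodable.encode c + 1) :=
    (E.primrec_code u).to_comp.comp (Primrec.succ.comp Primrec.encode).to_comp
  refine ComputablePred.halting_problem 0
    (ComputablePred.computable_of_manyOneReducible ⟨_, hf, fun c => ?_⟩ h)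
  rw [E.thmExistsProblem_code_iff_ev u (closed_subcodes U), hU, Denumerable.ofNat_encode]

end NMatUndec

/-- If the theorem existence problem for finite Nmatrices were decidable, then
the halting problem for counter machines with all counters initially zero would be decidable;
consequently (since the latter is undecidable), the theorem existence problem for finite
Nmatrices is undecidable. -/
theorem stmt_9 :
    (ComputablePred thmExistsProblem → ComputablePred haltProblem) ∧
    ¬ ComputablePred thmExistsProblem := by
  have h := NMatUndec.not_computablePred_thmExistsProblem
  exact ⟨fun h' => absurd h' h, h⟩
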